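/- Let x, y, σ ∈ ℂ with Re x > 0, Re y > 0, and |Re σ| < 1/4. Then U(1/2, 1, x+y) = (e^{(x+y)/2} / (2^{1/2} π^{3/2} i)) ∫_{σ−i∞}^{σ+i∞} Γ(1/4 − s) Γ(1/4 + s) D_{2s−1/2}(√(2x)) D_{−2s−1/2}(√(2y)) ds, where √(2x), √(2y) are principal square roots. (Note that for s on the contour, Re(2s − 1/2) < 0 and Re(−2s − 1/2) < 0, and Re((√(2x))²/2) = Re x > 0, so the parabolic cylinder functions are in the domain of the stated representation.) -/

import Mathlib

/-- Confluent hypergeometric function of the second kind via its Laplace-transform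
representation, valid for `Re a > 0`, `Re z > 0` (principal branch powers). -/
noncomputable def hypU (a b z : ℂ) : ℂ :=
  (Complex.Gamma a)⁻¹ *
    ∫ t in Set.Ioi (0 : ℝ), Complex.exp (-z * t) * (t : ℂ) ^ (a - 1) * ((1 : ℂ) + t) ^ (b - a - 1)

/-- Parabolic cylinder function `D_ν(z) = 2^{ν/2} e^{-z²/4} U(-ν/2, 1/2, z²/2)`,
valid for `Re ν < 0`, `Re(z²) > 0` (principal branch powers). -/
noncomputable def parD (ν z : ℂ) : ℂ :=
  (2 : ℂ) ^ (ν / 2) * Complex.exp (-z ^ 2 / 4) * hypU (-ν / 2) (1 / 2) (z ^ 2 / 2)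

open MeasureTheory Set

noncomputable def ker (x a b : ℂ) (t : ℝ) : ℂ :=
  Complex.exp (-x * t) * (t : ℂ) ^ a * ((1 : ℂ) + t) ^ b

noncomputable def JJ (x a b : ℂ) : ℂ := ∫ t in Ioi (0:ℝ), ker x a b t

lemma norm_ker (x a b : ℂ) {t : ℝ} (ht : 0 < t) :
    ‖ker x a b t‖ = Real.exp (-x.re * t) * t ^ a.re * (1 + t) ^ b.re := by
  unfold ker
  rw [norm_mul, norm_mul, Complex.norm_exp, Complex.norm_cpow_eq_rpow_re_of_pos ht,
    show (1 : ℂ) + t = ((1 + t : ℝ) : ℂ) by push_cast; rfl,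
    Complex.norm_cpow_eq_rpow_re_of_pos (by linarith)]
  simp

lemma measurable_ker (x a b : ℂ) : Measurable (ker x a b) := by
  unfold ker
  fun_prop

lemma integrable_ker {x a b : ℂ} (hx : 0 < x.re) (ha : -1 < a.re) (hb : b.re ≤ 2) :
    IntegrableOn (ker x a b) (Ioi 0) := by
  have h (k : ℝ) (hk : 0 ≤ k) :
      IntegrableOn (fun t : ℝ => t ^ (a.re + k) * Real.exp (-x.re * t ^ (1:ℝ))) (Ioi 0) :=
    integrableOn_rpow_mul_exp_neg_mul_rpow (by linarith) one_pos hx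
  have H := ((h 0 le_rfl).add ((h 1 zero_le_one).const_mul 2)).add (h 2 zero_le_two)
  refine Integrable.mono' H (measurable_ker x a b).aestronglyMeasurable ?_
  filter_upwards [ae_restrict_mem measurableSet_Ioi] with t ht
  have ht : 0 < t := ht
  rw [norm_ker x a b ht]
  simp only [Pi.add_apply, Real.rpow_one, Real.rpow_add ht, Real.rpow_zero, Real.rpow_two]
  have h1 : (1 + t) ^ b.re ≤ (1 + t) ^ (2:ℝ) :=
    Real.rpow_le_rpow_of_exponent_le (by linarith) hb
  rw [Real.rpow_two] at h1
  have h2 : 0 ≤ Real.exp (-x.re * t) * t ^ a.re := by positivity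
  nlinarith [mul_le_mul_of_nonneg_left h1 h2]

lemma ker_mul_one_add (x a b : ℂ) {t : ℝ} (ht : 0 < t) :
    ker x a (b + 1) t = ker x a b t + ker x (a + 1) b t := by
  unfold ker
  have h0 : (t : ℂ) ≠ 0 := by exact_mod_cast ht.ne'
  have h1 : (1 : ℂ) + t ≠ 0 := by
    have : (1 : ℝ) + t ≠ 0 := by linarith
    exact_mod_cast this
  rw [Complex.cpow_add _ _ h0, Complex.cpow_add _ _ h1]
  simp only [Complex.cpow_one]
  ring

lemma hasDerivAt_ker (x a b : ℂ) {t : ℝ} (ht : 0 < t) :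
    HasDerivAt (ker x (a + 1) (b + 1))
      (-x * ker x (a + 1) (b + 1) t + (a + 1) * (ker x a b t + ker x (a + 1) b t)
        + (b + 1) * ker x (a + 1) b t) t := by
  rw [← ker_mul_one_add x a b ht]
  have e1 : HasDerivAt (fun z : ℂ => Complex.exp (-x * z)) (Complex.exp (-x * t) * -x) (t:ℂ) := by
    simpa using ((hasDerivAt_id (t:ℂ)).const_mul (-x)).cexp
  have e2 : HasDerivAt (fun z : ℂ => z ^ (a + 1)) ((a + 1) * (t:ℂ) ^ a) (t:ℂ) := by
    have := (hasDerivAt_id (t:ℂ)).cpow_const (c := a + 1) (Or.inl (by simpa using ht))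
    simpa using this
  have e3 : HasDerivAt (fun z : ℂ => (1 + z) ^ (b + 1)) ((b + 1) * (1 + (t:ℂ)) ^ b) (t:ℂ) := by
    have := ((hasDerivAt_id (t:ℂ)).const_add 1).cpow_const (c := b + 1)
      (Or.inl (by simp; linarith))
    simpa using this
  have := ((e1.mul e2).mul e3).comp_ofReal
  refine this.congr_deriv ?_
  simp only [Pi.mul_apply, ker]
  ring

lemma JJ_rec {x a b : ℂ} (hx : 0 < x.re) (ha : -1 < a.re) (hb : b.re ≤ 1) :
    (a + 1) * JJ x a b = x * JJ x (a + 1) (b + 1) - (a + b + 2) * JJ x (a + 1) b := by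
  have i1 : IntegrableOn (ker x (a + 1) (b + 1)) (Ioi 0) :=
    integrable_ker hx (by simp; linarith) (by simp; linarith)
  have i2 : IntegrableOn (ker x a b) (Ioi 0) := integrable_ker hx ha (by linarith)
  have i3 : IntegrableOn (ker x (a + 1) b) (Ioi 0) :=
    integrable_ker hx (by simp; linarith) (by linarith)
  have i4 := i1.const_mul (-x)
  have i5 := (i2.add i3).const_mul (a + 1)
  have i6 := i3.const_mul (b + 1)
  have i7 := (i4.add i5).add i6
  have hd : ∀ t ∈ Ioi (0:ℝ), HasDerivAt (ker x (a + 1) (b + 1)) _ t :=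
    fun t ht => hasDerivAt_ker x a b ht
  have hlim := tendsto_zero_of_hasDerivAt_of_integrableOn_Ioi hd i7 i1
  have hc : ContinuousWithinAt (ker x (a + 1) (b + 1)) (Ici 0) 0 := by
    apply ContinuousAt.continuousWithinAt
    unfold ker
    refine ContinuousAt.mul (ContinuousAt.mul (by fun_prop)
      (Complex.continuousAt_ofReal_cpow_const 0 (a + 1) (Or.inl (by simp; linarith)))) ?_
    refine ContinuousAt.cpow (by fun_prop) (by fun_prop) ?_
    simp
  have key := integral_Ioi_of_hasDerivAt_of_tendsto hc hd i7 hlim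
  have h0 : ker x (a + 1) (b + 1) 0 = 0 := by
    unfold ker
    have : a + 1 ≠ 0 := by
      intro h
      have := congrArg Complex.re h
      simp at this; linarith
    simp [Complex.zero_cpow this]
  rw [h0, integral_add (by exact i4.add i5) i6, integral_add i4 (by exact i5), integral_const_mul,
    integral_const_mul, integral_const_mul, integral_add i2 i3] at key
  unfold JJ
  linear_combination key

lemma norm_JJ_le (x a b : ℂ) : ‖JJ x a b‖ ≤
    ∫ t in Ioi (0:ℝ), Real.exp (-x.re * t) * t ^ a.re * (1 + t) ^ b.re := by
  refine (norm_integral_le_integral_norm _).trans (le_of_eq ?_)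
  exact setIntegral_congr_fun measurableSet_Ioi fun t ht => norm_ker x a b ht

lemma continuous_JJ {x a b : ℂ} (hx : 0 < x.re) (ha : -1 < a.re) (hb : b.re ≤ 2) :
    Continuous fun τ : ℝ => JJ x (a - τ * Complex.I) (b + τ * Complex.I) := by
  unfold JJ
  refine continuous_of_dominated (bound := fun t => ‖ker x a b t‖)
    (fun τ => (measurable_ker _ _ _).aestronglyMeasurable) (fun τ => ?_)
    (integrable_ker hx ha hb).norm ?_
  · filter_upwards [ae_restrict_mem measurableSet_Ioi] with t ht
    rw [norm_ker _ _ _ ht, norm_ker _ _ _ ht]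
    simp
  · filter_upwards [ae_restrict_mem measurableSet_Ioi] with t ht
    have ht : 0 < t := ht
    unfold ker
    have h0 : (t : ℂ) ≠ 0 := by exact_mod_cast ht.ne'
    have h1 : (1 : ℂ) + t ≠ 0 := by
      have : (1 : ℝ) + t ≠ 0 := by linarith
      exact_mod_cast this
    refine (continuous_const.mul (Continuous.const_cpow (by fun_prop) (Or.inl h0))).mul
      (Continuous.const_cpow (by fun_prop) (Or.inl h1))

/-- integrability on vertical lines -/
lemma integrable_JJ {x : ℂ} {σ : ℝ} (hx : 0 < x.re) (hσ : |σ| < 1 / 4) :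
    Integrable fun τ : ℝ => JJ x (-3/4 - (σ + τ * Complex.I)) (σ + τ * Complex.I - 3/4) := by
  obtain ⟨h1, h2⟩ := abs_lt.1 hσ
  have hcont : Continuous fun τ : ℝ =>
      JJ x (-3/4 - (σ + τ * Complex.I)) (σ + τ * Complex.I - 3/4) := by
    have := continuous_JJ (x := x) (a := -3/4 - σ) (b := σ - 3/4) hx
      (by simp; norm_num; linarith) (by simp; norm_num; linarith)
    convert this using 3 <;> ring
  let M : ℝ → ℝ → ℝ := fun α β => ∫ t in Ioi (0:ℝ), Real.exp (-x.re * t) * t ^ α * (1 + t) ^ β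
  let C : ℝ := ‖x‖^2 * M (5/4 - σ) (5/4 + σ) + 3 * ‖x‖ * M (5/4 - σ) (1/4 + σ)
    + 3/4 * M (5/4 - σ) (σ - 3/4)
  let δ : ℝ := 1/4 - σ
  have hδ : 0 < δ := by simp only [δ]; linarith
  have hδ1 : δ < 1 := by simp only [δ]; linarith
  refine Integrable.mono' (integrable_inv_one_add_sq.const_mul (C / δ^2))
    hcont.aestronglyMeasurable (Filter.Eventually.of_forall fun τ => ?_)
  set s : ℂ := σ + τ * Complex.I with hs
  have hsre : s.re = σ := by simp [hs]
  have r1 := JJ_rec (x := x) (a := -3/4 - s) (b := s - 3/4) hx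
    (by simp [hsre]; norm_num; linarith) (by simp [hsre]; norm_num; linarith)
  have r2 := JJ_rec (x := x) (a := -3/4 - s + 1) (b := s - 3/4 + 1) hx
    (by simp [hsre]; norm_num; linarith) (by simp [hsre]; norm_num; linarith)
  have r3 := JJ_rec (x := x) (a := -3/4 - s + 1) (b := s - 3/4) hx
    (by simp [hsre]; norm_num; linarith) (by simp [hsre]; norm_num; linarith)
  set F := JJ x (-3/4 - s) (s - 3/4)
  have n1 := norm_JJ_le x (-3/4 - s + 1 + 1) (s - 3/4 + 1 + 1)
  have n2 := norm_JJ_le x (-3/4 - s + 1 + 1) (s - 3/4 + 1)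
  have n3 := norm_JJ_le x (-3/4 - s + 1 + 1) (s - 3/4)
  set A := JJ x (-3/4 - s + 1 + 1) (s - 3/4 + 1 + 1)
  set B := JJ x (-3/4 - s + 1 + 1) (s - 3/4 + 1)
  set D := JJ x (-3/4 - s + 1 + 1) (s - 3/4)
  have q0 : (-3/4 - s + 1 + 1).re = 5/4 - σ := by simp [hsre]; ring
  have q1 : (s - 3/4 + 1 + 1).re = 5/4 + σ := by simp [hsre]; ring
  have q2 : (s - 3/4 + 1).re = 1/4 + σ := by simp [hsre]; ring
  have q3 : (s - 3/4).re = σ - 3/4 := by simp [hsre]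
  rw [q0, q1] at n1
  rw [q0, q2] at n2
  rw [q0, q3] at n3
  have hF : (1/4 - s) * (5/4 - s) * F = x^2 * A - 3 * x * B + 3/4 * D := by
    linear_combination (5/4 - s) * r1 + x * r2 - 1/2 * r3
  have hFn : ‖1/4 - s‖ * ‖5/4 - s‖ * ‖F‖ ≤ C := by
    rw [← norm_mul, ← norm_mul, hF]
    refine (norm_add_le _ _).trans ?_
    refine (add_le_add_left (norm_sub_le _ _) _).trans ?_
    simp only [norm_mul, norm_pow]
    norm_num
    simp only [C, M]
    gcongr
  have w1 : ‖1/4 - s‖^2 = δ^2 + τ^2 := by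
    rw [← Complex.normSq_eq_norm_sq, Complex.normSq_apply]
    simp [hs, δ]; ring
  have w2 : ‖5/4 - s‖^2 = (1 + δ)^2 + τ^2 := by
    rw [← Complex.normSq_eq_norm_sq, Complex.normSq_apply]
    simp [hs, δ]; ring
  have w3 : ‖1/4 - s‖ ≤ ‖5/4 - s‖ := by
    apply (sq_le_sq₀ (norm_nonneg _) (norm_nonneg _)).1
    rw [w1, w2]; nlinarith
  have w4 : δ^2 * (1 + τ^2) ≤ ‖1/4 - s‖ * ‖5/4 - s‖ := by
    have : δ^2 * (1 + τ^2) ≤ ‖1/4 - s‖^2 := by 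
      have : δ ^ 2 ≤ 1 := by nlinarith
      rw [w1]; nlinarith [sq_nonneg τ]
    nlinarith [norm_nonneg (1/4 - s)]
  rw [← div_eq_mul_inv, div_div, le_div_iff₀ (by positivity), mul_comm]
  exact (mul_le_mul_of_nonneg_right w4 (norm_nonneg _)).trans hFn

noncomputable def phi (x : ℂ) : ℝ → ℂ :=
  indicator (Ioi 1) fun v => ker x (1/4) (1/4) ((v - 1)⁻¹)

lemma image_p : (fun t : ℝ => 1 + t⁻¹) '' Ioi 0 = Ioi 1 := by
  ext v
  simp only [mem_image, mem_Ioi]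
  constructor
  · rintro ⟨t, ht, rfl⟩
    have := inv_pos.2 ht
    linarith
  · intro hv
    exact ⟨(v - 1)⁻¹, inv_pos.2 (by linarith), by simp⟩

lemma deriv_p : ∀ t ∈ Ioi (0:ℝ), HasDerivWithinAt (fun t : ℝ => 1 + t⁻¹) (-(t^2)⁻¹) (Ioi 0) t :=
  fun _ ht => ((hasDerivAt_inv (ne_of_gt ht)).const_add 1).hasDerivWithinAt

lemma inj_p : InjOn (fun t : ℝ => 1 + t⁻¹) (Ioi 0) := by
  intro a _ b _ h
  simpa using h

lemma point_p (x s : ℂ) {t : ℝ} (ht : 0 < t) :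
    |-(t^2)⁻¹| • (((1 + t⁻¹ : ℝ) : ℂ) ^ (s - 1) * ker x (1/4) (1/4) ((1 + t⁻¹ - 1)⁻¹)) =
      ker x (-3/4 - s) (s - 3/4) t := by
  have h0 : (t : ℂ) ≠ 0 := by exact_mod_cast ht.ne'
  have h1 : (1 : ℂ) + t ≠ 0 := by
    have : (1 : ℝ) + t ≠ 0 := by linarith
    exact_mod_cast this
  have e1 : (1 + t⁻¹ - 1)⁻¹ = t := by simp
  have e2 : (((1 + t⁻¹ : ℝ) : ℂ)) ^ (s - 1) = ((1 : ℂ) + t) ^ (s - 1) / (t:ℂ) ^ (s - 1) := by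
    have := Complex.div_cpow_ofReal_nonneg (a := 1 + t) (b := t) (by linarith) ht.le (s - 1)
    push_cast at this
    rw [← this]
    congr 1
    push_cast
    field_simp
    ring
  rw [e1, e2, abs_neg, abs_of_pos (by positivity), Complex.real_smul]
  unfold ker
  rw [show -3/4 - s = 1/4 - (s - 1) - 2 by ring, show s - 3/4 = 1/4 + (s - 1) by ring,
    Complex.cpow_sub (1/4 - (s - 1)) 2 h0, Complex.cpow_sub (1/4) (s - 1) h0, Complex.cpow_add _ _ h1]
  rw [show (t:ℂ) ^ (2:ℂ) = (t:ℂ)^2 by exact_mod_cast Complex.cpow_natCast (t:ℂ) 2]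
  push_cast
  have : (t:ℂ) ^ (s - 1) ≠ 0 := by simp [Complex.cpow_eq_zero_iff, h0]
  generalize (t:ℂ) ^ (s - 1) = p at *
  generalize (t:ℂ) ^ (1 / 4 : ℂ) = q at *
  field_simp

lemma phi_ind (x s : ℂ) : (fun v : ℝ => (v : ℂ) ^ (s - 1) • phi x v) =
    indicator (Ioi 1) fun v : ℝ => (v:ℂ) ^ (s - 1) * ker x (1/4) (1/4) ((v - 1)⁻¹) := by
  ext v
  by_cases hv : v ∈ Ioi (1:ℝ) <;> simp [phi, hv]

lemma mellin_phi (x s : ℂ) : mellin (phi x) s = JJ x (-3/4 - s) (s - 3/4) := by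
  unfold mellin
  rw [phi_ind, setIntegral_indicator measurableSet_Ioi,
    inter_eq_self_of_subset_right (Ioi_subset_Ioi zero_le_one), ← image_p,
    integral_image_eq_integral_abs_deriv_smul measurableSet_Ioi deriv_p inj_p]
  exact setIntegral_congr_fun measurableSet_Ioi fun t ht => point_p x s ht

lemma mellinConv_phi {x s : ℂ} (hx : 0 < x.re) (hs : |s.re| < 1/4) :
    MellinConvergent (phi x) s := by
  obtain ⟨h1, h2⟩ := abs_lt.1 hs
  unfold MellinConvergent
  rw [phi_ind]
  refine ((integrable_indicator_iff measurableSet_Ioi).2 ?_).integrableOn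
  rw [← image_p,
    integrableOn_image_iff_integrableOn_abs_deriv_smul measurableSet_Ioi deriv_p inj_p]
  refine (integrable_ker (a := -3/4 - s) (b := s - 3/4) hx (by simp; norm_num; linarith)
    (by simp; linarith)).congr_fun (fun t ht => (point_p x s ht).symm) measurableSet_Ioi

lemma inversion {x : ℂ} {σ : ℝ} (hx : 0 < x.re) (hσ : |σ| < 1 / 4) {u : ℝ} (hu : 0 < u) :
    ∫ τ : ℝ, ((u:ℂ) ^ (σ + τ * Complex.I) * ((1:ℂ) + u) ^ (-(σ + τ * Complex.I))) *
      JJ x (-3/4 - (σ + τ * Complex.I)) (σ + τ * Complex.I - 3/4) =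
    2 * Real.pi * ker x (1/4) (1/4) u := by
  have hv : 0 < u⁻¹ := inv_pos.2 hu
  have hc : ContinuousAt (phi x) (1 + u⁻¹) := by
    have : ContinuousAt (fun v : ℝ => ker x (1/4) (1/4) ((v - 1)⁻¹)) (1 + u⁻¹) := by
      have h := (hasDerivAt_ker x (-3/4) (-3/4) hu).continuousAt
      norm_num at h
      refine ContinuousAt.comp (g := ker x (1/4) (1/4)) (f := fun v : ℝ => (v - 1)⁻¹) ?_ ?_
      · simpa using h
      · exact ContinuousAt.inv₀ (by fun_prop) (by simpa using hu.ne')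
    refine this.congr ?_
    filter_upwards [Ioi_mem_nhds (show 1 < 1 + u⁻¹ by linarith)] with v hv
    simp [phi, indicator_of_mem hv]
  have hm := mellinInv_mellin_eq σ (phi x) (x := 1 + u⁻¹) (by linarith)
    (mellinConv_phi hx (by simpa using hσ))
    (by
      unfold Complex.VerticalIntegrable
      simp_rw [mellin_phi]
      exact integrable_JJ hx hσ) hc
  unfold mellinInv at hm
  simp_rw [mellin_phi] at hm
  have hp : phi x (1 + u⁻¹) = ker x (1/4) (1/4) u := by
    have : 1 + u⁻¹ ∈ Ioi (1:ℝ) := by simpa using hu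
    rw [phi, indicator_of_mem this]; simp
  rw [hp] at hm
  rw [← hm, Complex.real_smul]
  have hpi : (Real.pi : ℂ) ≠ 0 := by exact_mod_cast Real.pi_ne_zero
  push_cast
  rw [← mul_assoc, mul_one_div_cancel (by simp [hpi]), one_mul]
  congr 1
  ext τ
  rw [smul_eq_mul]
  congr 1
  have := Complex.div_cpow_ofReal_nonneg (a := 1 + u) (b := u) (by linarith) hu.le
    (-(σ + τ * Complex.I))
  have e : (((1 + u : ℝ) : ℂ) / u) = 1 + (u:ℂ)⁻¹ := by
    have h0 : (u : ℂ) ≠ 0 := by exact_mod_cast hu.ne'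
    push_cast
    field_simp
    ring
  rw [e] at this
  rw [this, Complex.cpow_neg (u:ℂ), div_inv_eq_mul]
  push_cast
  ring

lemma main_aux {x y : ℂ} {σ : ℝ} (hx : 0 < x.re) (hy : 0 < y.re) (hσ : |σ| < 1 / 4) :
    ∫ τ : ℝ, JJ x (-3/4 - (σ + τ * Complex.I)) (σ + τ * Complex.I - 3/4) *
      JJ y (σ + τ * Complex.I - 3/4) (-3/4 - (σ + τ * Complex.I)) =
    2 * Real.pi * JJ (x + y) (-1/2) (-1/2) := by
  obtain ⟨h1, h2⟩ := abs_lt.1 hσ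
  have hF := integrable_JJ hx hσ
  set F : ℝ → ℂ := fun τ => JJ x (-3/4 - (σ + τ * Complex.I)) (σ + τ * Complex.I - 3/4) with hFd
  have hK : IntegrableOn (ker y (σ - 3/4) (-3/4 - σ)) (Ioi 0) :=
    integrable_ker hy (by simp; norm_num; linarith) (by simp; norm_num; linarith)
  have hprod : Integrable (Function.uncurry fun (τ u : ℝ) =>
      F τ * ker y (σ + τ * Complex.I - 3/4) (-3/4 - (σ + τ * Complex.I)) u)
      (volume.prod (volume.restrict (Ioi 0))) := by
    refine Integrable.mono (hF.mul_prod hK) ?_ ?_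
    · refine AEStronglyMeasurable.mul hF.aestronglyMeasurable.comp_fst ?_
      refine Measurable.aestronglyMeasurable ?_
      unfold ker
      fun_prop
    · have : ∀ᵐ z : ℝ × ℝ ∂(volume.prod (volume.restrict (Ioi (0:ℝ)))), z.2 ∈ Ioi (0:ℝ) :=
        Measure.quasiMeasurePreserving_snd.ae (ae_restrict_mem measurableSet_Ioi)
      filter_upwards [this] with z hz
      simp only [Function.uncurry, norm_mul]
      rw [norm_ker _ _ _ hz, norm_ker _ _ _ hz]
      simp
  have step : ∀ τ : ℝ, F τ * JJ y (σ + τ * Complex.I - 3/4) (-3/4 - (σ + τ * Complex.I)) =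
      ∫ u in Ioi (0:ℝ), F τ * ker y (σ + τ * Complex.I - 3/4) (-3/4 - (σ + τ * Complex.I)) u := by
    intro τ
    rw [integral_const_mul]; rfl
  change ∫ τ : ℝ, F τ * JJ y (σ + τ * Complex.I - 3/4) (-3/4 - (σ + τ * Complex.I)) = _
  simp_rw [step]
  rw [integral_integral_swap hprod]
  unfold JJ
  rw [← integral_const_mul]
  refine setIntegral_congr_fun measurableSet_Ioi fun u hu => ?_
  have hu : 0 < u := hu
  have h0 : (u : ℂ) ≠ 0 := by exact_mod_cast hu.ne'
  have h1 : (1 : ℂ) + u ≠ 0 := by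
    have : (1 : ℝ) + u ≠ 0 := by linarith
    exact_mod_cast this
  have inv := inversion hx hσ hu
  have : ∀ τ : ℝ, F τ * ker y (σ + τ * Complex.I - 3/4) (-3/4 - (σ + τ * Complex.I)) u =
      ker y (-3/4) (-3/4) u * (((u:ℂ) ^ (σ + τ * Complex.I) * ((1:ℂ) + u) ^ (-(σ + τ * Complex.I))) *
      JJ x (-3/4 - (σ + τ * Complex.I)) (σ + τ * Complex.I - 3/4)) := by
    intro τ
    simp only [hFd]
    unfold ker
    rw [show (σ + τ * Complex.I - 3/4 : ℂ) = (σ + τ * Complex.I) + (-3/4) by ring,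
      show (-3/4 - (σ + τ * Complex.I) : ℂ) = -(σ + τ * Complex.I) + (-3/4) by ring,
      Complex.cpow_add _ _ h0, Complex.cpow_add _ _ h1]
    ring
  simp_rw [this]
  rw [integral_const_mul, inv]
  unfold ker
  rw [show (-1/2 : ℂ) = -3/4 + 1/4 by norm_num, Complex.cpow_add _ _ h0, Complex.cpow_add _ _ h1,
    show -(x + y) * u = -x * u + -y * u by ring, Complex.exp_add]
  ring

lemma hypU_eq (a b z : ℂ) : hypU a b z = (Complex.Gamma a)⁻¹ * JJ z (a - 1) (b - a - 1) := rfl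

lemma parD_eq (ν x : ℂ) : parD ν ((2 * x) ^ ((1:ℂ) / 2)) =
    (2:ℂ) ^ (ν / 2) * Complex.exp (-x / 2) * hypU (-ν / 2) (1 / 2) x := by
  have h : ((2 * x) ^ ((1:ℂ) / 2)) ^ 2 = 2 * x := by
    have := Complex.cpow_nat_inv_pow (2 * x) (n := 2) two_ne_zero
    simpa using this
  unfold parD
  rw [h]
  congr 3
  · ring
  · ring

/-- Integral addition theorem (case `c = 1/2`):
`U(1/2,1,x+y) = (e^{(x+y)/2}/(2^{1/2} π^{3/2} i)) ∫_{σ-i∞}^{σ+i∞} Γ(1/4-s) Γ(1/4+s)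
D_{2s-1/2}(√(2x)) D_{-2s-1/2}(√(2y)) ds`, the contour integral being `i ∫_ℝ f(σ+iτ) dτ`. -/
theorem addition_c_half (x y σ : ℂ) (hx : 0 < x.re) (hy : 0 < y.re)
    (hσ : |σ.re| < 1 / 4) :
    hypU (1 / 2) 1 (x + y) =
      (Complex.exp ((x + y) / 2) /
          ((2 : ℂ) ^ ((1 : ℂ) / 2) * (Real.pi : ℂ) ^ ((3 : ℂ) / 2) * Complex.I)) *
        (Complex.I * ∫ τ : ℝ,
          Complex.Gamma (1 / 4 - (σ + Complex.I * τ)) *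
          Complex.Gamma (1 / 4 + (σ + Complex.I * τ)) *
          parD (2 * (σ + Complex.I * τ) - 1 / 2) ((2 * x) ^ ((1 : ℂ) / 2)) *
          parD (-2 * (σ + Complex.I * τ) - 1 / 2) ((2 * y) ^ ((1 : ℂ) / 2))) := by
  obtain ⟨h1, h2⟩ := abs_lt.1 hσ
  let H : ℝ → ℂ := fun τ => JJ x (-3/4 - (σ.re + τ * Complex.I)) (σ.re + τ * Complex.I - 3/4) *
      JJ y (σ.re + τ * Complex.I - 3/4) (-3/4 - (σ.re + τ * Complex.I))
  have hpt : ∀ τ : ℝ, Complex.Gamma (1 / 4 - (σ + Complex.I * τ)) *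
          Complex.Gamma (1 / 4 + (σ + Complex.I * τ)) *
          parD (2 * (σ + Complex.I * τ) - 1 / 2) ((2 * x) ^ ((1 : ℂ) / 2)) *
          parD (-2 * (σ + Complex.I * τ) - 1 / 2) ((2 * y) ^ ((1 : ℂ) / 2)) =
      (2:ℂ) ^ (-(1:ℂ) / 2) * Complex.exp (-((x + y) / 2)) * H (τ + σ.im) := by
    intro τ
    have hs : (σ.re + ((τ + σ.im : ℝ) : ℂ) * Complex.I : ℂ) = σ + Complex.I * τ := by
      conv_rhs => rw [← Complex.re_add_im σ]
      push_cast
      ring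
    simp only [H, hs]
    set s := σ + Complex.I * τ with hsd
    have hsre : s.re = σ.re := by simp [hsd]
    have g1 : Complex.Gamma (1/4 - s) ≠ 0 :=
      Complex.Gamma_ne_zero_of_re_pos (by simp [hsre]; norm_num; linarith)
    have g2 : Complex.Gamma (1/4 + s) ≠ 0 :=
      Complex.Gamma_ne_zero_of_re_pos (by simp [hsre]; norm_num; linarith)
    rw [parD_eq, parD_eq, hypU_eq, hypU_eq]
    rw [show -(2 * s - 1/2) / 2 = 1/4 - s by ring, show -(-2 * s - 1/2) / 2 = 1/4 + s by ring,
      show 1/4 - s - 1 = -3/4 - s by ring, show 1/2 - (1/4 - s) - 1 = s - 3/4 by ring,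
      show 1/4 + s - 1 = s - 3/4 by ring, show 1/2 - (1/4 + s) - 1 = -3/4 - s by ring,
      show -(1:ℂ)/2 = (2 * s - 1/2) / 2 + (-2 * s - 1/2) / 2 by ring,
      Complex.cpow_add _ _ two_ne_zero, show -((x + y) / 2) = -x/2 + -y/2 by ring, Complex.exp_add]
    generalize Complex.Gamma (1/4 - s) = A at *
    generalize Complex.Gamma (1/4 + s) = B at *
    generalize JJ x (-3/4 - s) (s - 3/4) = C at *
    generalize JJ y (s - 3/4) (-3/4 - s) = D at *
    generalize (2:ℂ) ^ ((2 * s - 1/2) / 2) = P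
    generalize (2:ℂ) ^ ((-2 * s - 1/2) / 2) = Q
    field_simp
  simp_rw [hpt]
  rw [integral_const_mul, integral_add_right_eq_self H σ.im, main_aux hx hy hσ, hypU_eq,
    Complex.Gamma_one_half_eq]
  have hpi : (Real.pi : ℂ) ≠ 0 := by exact_mod_cast Real.pi_ne_zero
  have hp2 : (Real.pi : ℂ) ^ ((1:ℂ)/2) ≠ 0 := by simp [Complex.cpow_eq_zero_iff, hpi]
  have h22 : (2 : ℂ) ^ ((1:ℂ)/2) ≠ 0 := by simp [Complex.cpow_eq_zero_iff]
  have hsq : (2 : ℂ) ^ ((1:ℂ)/2) * (2 : ℂ) ^ ((1:ℂ)/2) = 2 := by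
    rw [← Complex.cpow_add _ _ two_ne_zero]; norm_num
  rw [show (3:ℂ)/2 = 1 + 1/2 by norm_num, Complex.cpow_add _ _ hpi, Complex.cpow_one,
    show (-(1:ℂ)/2) = -(1/2) by norm_num, Complex.cpow_neg, Complex.exp_neg,
    show (1/2 - 1 : ℂ) = -(1/2) by norm_num, show (1 - 1/2 - 1 : ℂ) = -(1/2) by norm_num]
  have he := Complex.exp_ne_zero ((x + y) / 2)
  generalize JJ (x + y) (-(1/2)) (-(1/2)) = J
  generalize Complex.exp ((x + y) / 2) = E at *
  generalize (2 : ℂ) ^ ((1:ℂ)/2) = r at *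
  generalize (Real.pi : ℂ) ^ ((1:ℂ)/2) = q at *
  field_simp
  linear_combination J * hsq
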